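/- Let n jobs be given, where job j has processing time p_j ∈ ℕ and weight w_j ∈ ℕ, together with a set K ⊆ {1,…,n} × {1,…,n} of precedence constraints. For J ⊆ {1,…,n}, define OPT[J] ∈ ℕ∞ as the minimum of ∑_{j∈J} w_j·C_j(π) over all linear orderings π of J processed consecutively without idle time starting at time 0 that respect K on J (∞ if none exists). Then for every J ⊆ {1,…,n} of even cardinality, OPT[J] = min over all X ⊆ J with |X| = |J|/2 of ( OPT[X] + h(J,X) + OPT[J∖X] ), where h(J,X) = ∞ if there exist j ∈ J∖X and k ∈ X with (j,k) ∈ K, and h(J,X) = p(X) · ∑_{j∈J∖X} w_j otherwise, with p(X) = ∑_{k∈X} p_k. -/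

import Mathlib

/-- Total weighted completion time of the jobs in the list, processed consecutively
without idle time starting at time `t`, in the order given by the list. -/
def wcCost {n : ℕ} (p w : Fin n → ℕ) : ℕ → List (Fin n) → ℕ
  | _, [] => 0
  | t, j :: l => w j * (t + p j) + wcCost p w (t + p j) l

/-- The ordering `l` respects the precedence constraints `K` : whenever `(i, k) ∈ K`
and both jobs appear in `l`, job `i` precedes job `k` in `l`. -/
def Respects {n : ℕ} (K : Finset (Fin n × Fin n)) (l : List (Fin n)) : Prop :=
  ∀ i k : Fin n, (i, k) ∈ K → i ∈ l → k ∈ l → [i, k].Sublist l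

/-- `OPT p w K J` : minimum of `∑_{j ∈ J} w j * C j` over all orderings of `J`
processed consecutively without idle time starting at time `0` and respecting the
precedence constraints `K` (`⊤` if no such ordering exists). -/
noncomputable def OPT {n : ℕ} (p w : Fin n → ℕ) (K : Finset (Fin n × Fin n))
    (J : Finset (Fin n)) : ℕ∞ :=
  sInf { v : ℕ∞ | ∃ l : List (Fin n), l.Nodup ∧ l.toFinset = J ∧
    Respects K l ∧ v = (wcCost p w 0 l : ℕ∞) }

/-!
Cut an ordering of `J` after its first `m` jobs, and let `X` be the set of these jobs. The second
part is processed exactly as if it started at time `0`, except that each of its completion times is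
shifted by `p(X)`, which costs `p(X) * ∑ j ∈ J \ X, w j`. The ordering respects `K` iff both parts
do and no job of `J \ X` has to precede a job of `X`. Hence orderings of `J` correspond to a choice
of `X` together with independent orderings of `X` and `J \ X`.
-/

theorem pair_sublist_append_iff {α : Type*} {a b : α} {l₁ l₂ : List α} :
    [a, b].Sublist (l₁ ++ l₂) ↔
      [a, b].Sublist l₁ ∨ a ∈ l₁ ∧ b ∈ l₂ ∨ [a, b].Sublist l₂ := by
  induction l₁ with
  | nil =>
    simp only [List.nil_append, List.sublist_nil, reduceCtorEq, List.not_mem_nil, false_and,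
      false_or]
  | cons c l ih =>
    simp only [List.cons_append, List.cons_sublist_cons', List.singleton_sublist, List.mem_append,
      List.mem_cons, ih]
    tauto

section

variable {n : ℕ} {p w : Fin n → ℕ} {K : Finset (Fin n × Fin n)} {J X : Finset (Fin n)}
  {l l₁ l₂ : List (Fin n)}

theorem wcCost_append (t : ℕ) (l₁ l₂ : List (Fin n)) :
    wcCost p w t (l₁ ++ l₂) = wcCost p w t l₁ + wcCost p w (t + (l₁.map p).sum) l₂ := by
  induction l₁ generalizing t with
  | nil => simp [wcCost]
  | cons j l ih => simp [wcCost, ih, add_assoc]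

theorem wcCost_add_start (s t : ℕ) (l : List (Fin n)) :
    wcCost p w (s + t) l = s * (l.map w).sum + wcCost p w t l := by
  induction l generalizing t with
  | nil => simp [wcCost]
  | cons j l ih =>
    simp only [wcCost, List.map_cons, List.sum_cons, add_assoc s t, ih]
    ring

theorem respects_append_iff (hd : l₁.Disjoint l₂) :
    Respects K (l₁ ++ l₂) ↔
      Respects K l₁ ∧ Respects K l₂ ∧ ∀ j ∈ l₂, ∀ k ∈ l₁, (j, k) ∉ K := by
  have mem_of_pair {i k : Fin n} {l : List (Fin n)} (hs : [i, k].Sublist l) : i ∈ l ∧ k ∈ l :=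
    ⟨hs.subset (by simp), hs.subset (by simp)⟩
  have notMem_right {i : Fin n} (h₁ : i ∈ l₁) : i ∉ l₂ := fun h₂ => hd h₁ h₂
  simp only [Respects, pair_sublist_append_iff, List.mem_append]
  constructor
  · intro hr
    refine ⟨fun i k hik hi hk => ?_, fun i k hik hi hk => ?_, fun j hj k hk hjk => ?_⟩
    · grind [hr i k hik (.inl hi) (.inl hk)]
    · grind [hr i k hik (.inr hi) (.inr hk)]
    · grind [hr j k hjk (.inr hj) (.inl hk)]
  · rintro ⟨h₁, h₂, hc⟩ i k hik (hi | hi) (hk | hk)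
    · exact .inl (h₁ i k hik hi hk)
    · exact .inr (.inl ⟨hi, hk⟩)
    · exact (hc i hi k hk hik).elim
    · exact .inr (.inr (h₂ i k hik hi hk))

/-- The feasible schedules of the job set `J`, over which `OPT p w K J` minimises: `l` lists each
job of `J` exactly once, in an order respecting the precedence constraints `K`. -/
structure IsSchedule (K : Finset (Fin n × Fin n)) (J : Finset (Fin n)) (l : List (Fin n)) :
    Prop where
  nodup : l.Nodup
  toFinset_eq : l.toFinset = J
  respects : Respects K l

namespace IsSchedule

theorem mem_iff (h : IsSchedule K J l) {j : Fin n} : j ∈ l ↔ j ∈ J := by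
  rw [← h.toFinset_eq, List.mem_toFinset]

theorem length_eq (h : IsSchedule K J l) : l.length = J.card := by
  rw [← h.toFinset_eq, List.toFinset_card_of_nodup h.nodup]

theorem sum_map_eq (h : IsSchedule K J l) (f : Fin n → ℕ) : (l.map f).sum = ∑ j ∈ J, f j := by
  rw [← h.toFinset_eq, List.sum_toFinset f h.nodup]

theorem append (hX : X ⊆ J) (h₁ : IsSchedule K X l₁) (h₂ : IsSchedule K (J \ X) l₂)
    (hK : ∀ j ∈ J \ X, ∀ k ∈ X, (j, k) ∉ K) : IsSchedule K J (l₁ ++ l₂) := by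
  have hd : l₁.Disjoint l₂ := by
    rw [← List.disjoint_toFinset_iff_disjoint, h₁.toFinset_eq, h₂.toFinset_eq]
    exact Finset.disjoint_sdiff
  refine ⟨h₁.nodup.append h₂.nodup hd, ?_, (respects_append_iff hd).mpr ?_⟩
  · rw [List.toFinset_append, h₁.toFinset_eq, h₂.toFinset_eq, Finset.union_sdiff_of_subset hX]
  · simpa only [h₁.mem_iff, h₂.mem_iff] using ⟨h₁.respects, h₂.respects, hK⟩

theorem exists_of_append (h : IsSchedule K J (l₁ ++ l₂)) :
    ∃ X ⊆ J, IsSchedule K X l₁ ∧ IsSchedule K (J \ X) l₂ ∧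
      ∀ j ∈ J \ X, ∀ k ∈ X, (j, k) ∉ K := by
  obtain ⟨hn₁, hn₂, hd⟩ := List.nodup_append'.mp h.nodup
  obtain ⟨hr₁, hr₂, hK⟩ := (respects_append_iff hd).mp h.respects
  have hJ : l₁.toFinset ∪ l₂.toFinset = J := by rw [← List.toFinset_append, h.toFinset_eq]
  have hY : J \ l₁.toFinset = l₂.toFinset := by
    rw [← hJ, Finset.union_sdiff_cancel_left (List.disjoint_toFinset_iff_disjoint.mpr hd)]
  refine ⟨l₁.toFinset, hJ ▸ Finset.subset_union_left, ⟨hn₁, rfl, hr₁⟩, ⟨hn₂, hY.symm, hr₂⟩, ?_⟩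
  simpa only [hY, List.mem_toFinset] using hK

end IsSchedule

theorem OPT_eq_iInf :
    OPT p w K J = ⨅ (l : List (Fin n)) (_ : IsSchedule K J l), (wcCost p w 0 l : ℕ∞) := by
  refine le_antisymm (le_iInf₂ fun l h => ?_) (le_sInf ?_)
  · exact sInf_le ⟨l, h.nodup, h.toFinset_eq, h.respects, rfl⟩
  · rintro _ ⟨l, hn, hJ, hr, rfl⟩
    exact iInf₂_le l ⟨hn, hJ, hr⟩

theorem IsSchedule.OPT_le (h : IsSchedule K J l) : OPT p w K J ≤ wcCost p w 0 l :=
  OPT_eq_iInf.trans_le (iInf₂_le l h)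

/-- The quantity `h(J, X)`: the extra cost of processing `J \ X` after `X`, which is `⊤` if the
precedence constraints `K` forbid that order. -/
def splitCost (p w : Fin n → ℕ) (K : Finset (Fin n × Fin n)) (J X : Finset (Fin n)) : ℕ∞ :=
  if ∃ j ∈ J \ X, ∃ k ∈ X, (j, k) ∈ K then ⊤
  else (((∑ k ∈ X, p k) * ∑ j ∈ J \ X, w j : ℕ) : ℕ∞)

theorem splitCost_eq_top (h : ∃ j ∈ J \ X, ∃ k ∈ X, (j, k) ∈ K) : splitCost p w K J X = ⊤ :=
  if_pos h

theorem splitCost_eq_mul (h : ∀ j ∈ J \ X, ∀ k ∈ X, (j, k) ∉ K) :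
    splitCost p w K J X = ((∑ k ∈ X, p k) * ∑ j ∈ J \ X, w j : ℕ) :=
  if_neg fun ⟨j, hj, k, hk, hjk⟩ => h j hj k hk hjk

theorem IsSchedule.coe_wcCost_append (h₁ : IsSchedule K X l₁) (h₂ : IsSchedule K (J \ X) l₂)
    (hK : ∀ j ∈ J \ X, ∀ k ∈ X, (j, k) ∉ K) :
    (wcCost p w 0 (l₁ ++ l₂) : ℕ∞) =
      wcCost p w 0 l₁ + splitCost p w K J X + wcCost p w 0 l₂ := by
  rw [wcCost_append, Nat.add_comm 0, wcCost_add_start, h₁.sum_map_eq, h₂.sum_map_eq,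
    splitCost_eq_mul hK, ← add_assoc, Nat.cast_add, Nat.cast_add]

theorem OPT_le_add_splitCost_add (hX : X ⊆ J) :
    OPT p w K J ≤ OPT p w K X + splitCost p w K J X + OPT p w K (J \ X) := by
  by_cases hK : ∃ j ∈ J \ X, ∃ k ∈ X, (j, k) ∈ K
  · simp [splitCost_eq_top hK]
  push Not at hK
  rw [OPT_eq_iInf (J := X), OPT_eq_iInf (J := J \ X), ENat.iInf₂_add]
  refine ENat.le_iInf₂_add_iInf₂ fun l₁ h₁ l₂ h₂ => ?_
  calc OPT p w K J ≤ wcCost p w 0 (l₁ ++ l₂) := (h₁.append hX h₂ hK).OPT_le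
    _ = wcCost p w 0 l₁ + splitCost p w K J X + wcCost p w 0 l₂ :=
      h₁.coe_wcCost_append h₂ hK

theorem IsSchedule.exists_add_splitCost_add_le {m : ℕ} (h : IsSchedule K J l) (hm : m ≤ J.card) :
    ∃ X ⊆ J, X.card = m ∧
      OPT p w K X + splitCost p w K J X + OPT p w K (J \ X) ≤ wcCost p w 0 l := by
  have hcut : l.take m ++ l.drop m = l := List.take_append_drop m l
  obtain ⟨X, hX, h₁, h₂, hK⟩ := IsSchedule.exists_of_append (hcut.symm ▸ h)
  refine ⟨X, hX, ?_, ?_⟩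
  · rw [← h₁.length_eq, List.length_take, h.length_eq, min_eq_left hm]
  calc OPT p w K X + splitCost p w K J X + OPT p w K (J \ X)
      ≤ wcCost p w 0 (l.take m) + splitCost p w K J X + wcCost p w 0 (l.drop m) := by
        gcongr
        exacts [h₁.OPT_le, h₂.OPT_le]
    _ = wcCost p w 0 (l.take m ++ l.drop m) :=
        (h₁.coe_wcCost_append h₂ hK).symm
    _ = wcCost p w 0 l := by rw [hcut]

end

theorem stmt5_general {n : ℕ} (p w : Fin n → ℕ) (K : Finset (Fin n × Fin n))
    (J : Finset (Fin n)) {m : ℕ} (hm : m ≤ J.card) :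
    OPT p w K J =
      ⨅ (X : Finset (Fin n)) (_ : X ⊆ J ∧ X.card = m),
        (OPT p w K X + splitCost p w K J X + OPT p w K (J \ X)) := by
  refine le_antisymm (le_iInf₂ fun X hX => OPT_le_add_splitCost_add hX.1) ?_
  rw [OPT_eq_iInf]
  refine le_iInf₂ fun l hl => ?_
  obtain ⟨X, hXJ, hXm, hle⟩ := hl.exists_add_splitCost_add_le hm
  exact iInf₂_le_of_le X ⟨hXJ, hXm⟩ hle

theorem stmt5 {n : ℕ} (p w : Fin n → ℕ) (K : Finset (Fin n × Fin n))
    (J : Finset (Fin n)) (hJ : Even J.card) :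
    OPT p w K J =
      ⨅ (X : Finset (Fin n)) (_ : X ⊆ J ∧ X.card = J.card / 2),
        (OPT p w K X +
          (if ∃ j ∈ J \ X, ∃ k ∈ X, (j, k) ∈ K then ⊤
            else (((∑ k ∈ X, p k) * ∑ j ∈ J \ X, w j : ℕ) : ℕ∞)) +
          OPT p w K (J \ X)) :=
  stmt5_general p w K J (Nat.div_le_self J.card 2)
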